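/- Reflection identity for the hat-function Fourier coefficients: for every j with 1 ≤ j ≤ N and every k with 0 ≤ k ≤ N−1, one has A_{2N−1−k}^j = − ((2k+1)² / (4N − 1 − 2k)²) · A_k^j. -/

import Mathlib

open Real

/-- The piecewise linear hat function `φ_j` on `[0,T]` for a uniform mesh with `N`
elements of size `h = T/N` and nodes `t_i = i h`: for `j = 1,…,N−1` the interior hat
`φ_j(t) = max(0, 1 − |t − t_j|/h)`, and for `j = N` the boundary hat
`φ_N(t) = max(0, 1 − (t_N − t)/h)`. -/
noncomputable def hatFn (N : ℕ) (T : ℝ) (j : ℕ) (t : ℝ) : ℝ :=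
  if j = N then max 0 (1 - ((N : ℝ) * (T / N) - t) / (T / N))
  else max 0 (1 - |t - (j : ℝ) * (T / N)| / (T / N))

/-- The Fourier coefficient `A_k^j = (2/T) ∫_0^T φ_j(t) sin((π/2 + kπ) t / T) dt`. -/
noncomputable def fourierCoef (N : ℕ) (T : ℝ) (k j : ℕ) : ℝ :=
  (2 / T) * ∫ t in (0 : ℝ)..T, hatFn N T j t * Real.sin ((π / 2 + k * π) * t / T)

/-!
Integrating by parts twice against `sin (w t)`, a hat of half-width `h` centred at `c` contributes
only the values of the sine at `c` and `c ± h`, which combine to a multiple of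
`sin (w h / 2) ^ 2 * sin (w c) / w ^ 2`. The boundary hat is half of a full hat because each mode
has a critical point at `T`. In terms of `x_k` this reads
`A_k^j = C_j (sin x_k / x_k)² sin (2 j x_k)`, and `x_{2N-1-k} = π - x_k`.
-/

lemma one_sub_cos_eq (y : ℝ) : 1 - cos y = 2 * sin (y / 2) ^ 2 := by
  rw [sin_sq_eq_half_sub, mul_div_cancel₀ y two_ne_zero]
  ring

lemma sin_two_mul_nat_mul_pi_sub (j : ℕ) (x : ℝ) : sin (2 * j * (π - x)) = -sin (2 * j * x) := by
  rw [← sin_nat_mul_two_pi_sub _ j]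
  congr 1
  ring

/-- The hat function of height `1` and half-width `h` centred at `c`: the shape shared by all the
`φ_j` on `[0, T]`. -/
noncomputable def hat (c h t : ℝ) : ℝ :=
  max 0 (1 - |t - c| / h)

section Hat

variable {a b c h t w : ℝ}

lemma continuous_hat : Continuous (hat c h) := by
  unfold hat
  fun_prop

lemma hat_neg (c h t : ℝ) : hat c h (-t) = hat (-c) h t := by
  rw [hat, hat, ← abs_neg, neg_sub, sub_neg_eq_add, sub_neg_eq_add, add_comm]

lemma hat_eq_zero_of_le_sub (hh : 0 < h) (ht : t ≤ c - h) : hat c h t = 0 := by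
  have h_le : h ≤ |t - c| := by
    rw [abs_sub_comm]
    exact le_abs.2 (.inl (by linarith))
  exact max_eq_left (sub_nonpos.2 ((one_le_div hh).2 h_le))

lemma hat_eq_sub_div (hh : 0 < h) (ht : t ∈ Set.Icc (c - h) c) :
    hat c h t = (t - (c - h)) / h := by
  have h_abs : |t - c| = c - t := by rw [abs_sub_comm, abs_of_nonneg (sub_nonneg.2 ht.2)]
  have h_eq : 1 - |t - c| / h = (t - (c - h)) / h := by
    rw [h_abs]
    field_simp
    ring
  rw [hat, h_eq, max_eq_right (div_nonneg (sub_nonneg.2 ht.1) hh.le)]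

lemma integral_sub_mul_sin (a b : ℝ) (hw : w ≠ 0) :
    ∫ t in a..b, (t - a) * sin (w * t) =
      (sin (w * b) - sin (w * a)) / w ^ 2 - (b - a) * cos (w * b) / w := by
  have h_deriv (t : ℝ) : HasDerivAt
      (fun s ↦ sin (w * s) / w ^ 2 - (s - a) * cos (w * s) / w) ((t - a) * sin (w * t)) t := by
    have h_lin : HasDerivAt (fun s ↦ w * s) w t := by
      simpa using (hasDerivAt_id t).const_mul w
    have h_sub : HasDerivAt (fun s ↦ s - a) 1 t := (hasDerivAt_id t).sub_const a
    refine ((h_lin.sin.div_const _).sub ((h_sub.mul h_lin.cos).div_const w)).congr_deriv ?_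
    field_simp
    ring
  rw [intervalIntegral.integral_eq_sub_of_hasDerivAt (fun t _ ↦ h_deriv t)
    (Continuous.intervalIntegrable (by fun_prop) _ _)]
  ring

lemma intervalIntegrable_hat_mul_sin (c h w a b : ℝ) :
    IntervalIntegrable (fun t ↦ hat c h t * sin (w * t)) MeasureTheory.volume a b :=
  (continuous_hat.mul (by fun_prop)).intervalIntegrable a b

lemma integral_hat_mul_sin_left (hh : 0 < h) (hw : w ≠ 0) (ha : a ≤ c - h) :
    ∫ t in a..c, hat c h t * sin (w * t) =
      (sin (w * c) - sin (w * (c - h))) / (h * w ^ 2) - cos (w * c) / w := by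
  have h_zero : ∫ t in a..(c - h), hat c h t * sin (w * t) = 0 := by
    refine intervalIntegral.integral_zero_ae (.of_forall fun t ht ↦ ?_)
    rw [Set.uIoc_of_le ha] at ht
    rw [hat_eq_zero_of_le_sub hh ht.2, zero_mul]
  have h_ramp : ∫ t in (c - h)..c, hat c h t * sin (w * t) =
      h⁻¹ * ∫ t in (c - h)..c, (t - (c - h)) * sin (w * t) := by
    rw [← intervalIntegral.integral_const_mul]
    refine intervalIntegral.integral_congr fun t ht ↦ ?_
    rw [Set.uIcc_of_le (by linarith)] at ht
    simp only [hat_eq_sub_div hh ht]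
    ring
  rw [← intervalIntegral.integral_add_adjacent_intervals
    (intervalIntegrable_hat_mul_sin c h w a (c - h)) (intervalIntegrable_hat_mul_sin c h w _ c),
    h_zero, h_ramp, integral_sub_mul_sin _ _ hw]
  field_simp
  ring

lemma integral_hat_mul_sin_right (hh : 0 < h) (hw : w ≠ 0) (hb : c + h ≤ b) :
    ∫ t in c..b, hat c h t * sin (w * t) =
      (sin (w * c) - sin (w * (c + h))) / (h * w ^ 2) + cos (w * c) / w := by
  have h_reflect : ∫ t in c..b, hat c h t * sin (w * t) =
      ∫ t in -b..-c, hat (-c) h t * sin (-w * t) := by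
    rw [← intervalIntegral.integral_comp_neg]
    simp only [hat_neg, neg_neg, neg_mul_neg]
  rw [h_reflect, integral_hat_mul_sin_left hh (neg_ne_zero.2 hw) (by linarith),
    ← neg_add', neg_mul_neg, neg_mul_neg]
  ring

lemma integral_hat_mul_sin (hh : 0 < h) (hw : w ≠ 0) (ha : a ≤ c - h) (hb : c + h ≤ b) :
    ∫ t in a..b, hat c h t * sin (w * t) =
      4 * sin (w * h / 2) ^ 2 * sin (w * c) / (h * w ^ 2) := by
  have h_second_difference : 2 * sin (w * c) - sin (w * (c - h)) - sin (w * (c + h)) =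
      4 * sin (w * h / 2) ^ 2 * sin (w * c) := by
    rw [mul_sub, mul_add, sin_sub, sin_add]
    linear_combination 2 * sin (w * c) * one_sub_cos_eq (w * h)
  rw [← intervalIntegral.integral_add_adjacent_intervals
    (intervalIntegrable_hat_mul_sin c h w a c) (intervalIntegrable_hat_mul_sin c h w c b),
    integral_hat_mul_sin_left hh hw ha, integral_hat_mul_sin_right hh hw hb,
    ← h_second_difference]
  ring

lemma integral_hat_mul_sin_left_of_cos_eq_zero (hh : 0 < h) (hw : w ≠ 0) (ha : a ≤ c - h)
    (hcos : cos (w * c) = 0) :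
    ∫ t in a..c, hat c h t * sin (w * t) =
      2 * sin (w * h / 2) ^ 2 * sin (w * c) / (h * w ^ 2) := by
  have h_difference : sin (w * c) - sin (w * (c - h)) = 2 * sin (w * h / 2) ^ 2 * sin (w * c) := by
    rw [mul_sub, sin_sub, hcos]
    linear_combination sin (w * c) * one_sub_cos_eq (w * h)
  rw [integral_hat_mul_sin_left hh hw ha, hcos, h_difference]
  ring

end Hat

/-- The number `x_k = (π/2 + kπ) / (2N)`, half the phase gained by the `k`-th sine mode across one
mesh cell. -/
noncomputable def halfPhase (N k : ℕ) : ℝ :=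
  (π / 2 + k * π) / (2 * N)

section FourierCoefficients

variable {N k l j : ℕ} {T t : ℝ}

lemma halfPhase_eq_mul (N k : ℕ) : halfPhase N k = (2 * k + 1) * (π / (4 * N)) := by
  unfold halfPhase
  ring

lemma halfPhase_pos (hN : N ≠ 0) : 0 < halfPhase N k := by
  unfold halfPhase
  positivity

lemma cos_two_mul_halfPhase (hN : N ≠ 0) : cos (2 * N * halfPhase N k) = 0 := by
  rw [halfPhase, mul_div_cancel₀ _ (by positivity), cos_add_nat_mul_pi, cos_pi_div_two, mul_zero]

lemma halfPhase_eq_pi_sub (hN : N ≠ 0) (hkl : k + l + 1 = 2 * N) :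
    halfPhase N l = π - halfPhase N k := by
  have hkl' : (k + l + 1 : ℝ) = 2 * N := by exact_mod_cast hkl
  unfold halfPhase
  field_simp
  linear_combination 2 * hkl'

lemma hatFn_eq_hat (hN : N ≠ 0) (ht : t ≤ T) :
    hatFn N T j t = hat (j * (T / N)) (T / N) t := by
  rw [hatFn, hat]
  split_ifs with hj
  · rw [hj, mul_div_cancel₀ T (by positivity), abs_sub_comm, abs_of_nonneg (sub_nonneg.2 ht)]
  · rfl

lemma fourierCoef_eq_integral_hat (hN : N ≠ 0) (hT : 0 < T) :
    fourierCoef N T k j = 2 / T * ∫ t in (0 : ℝ)..T,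
      hat (j * (T / N)) (T / N) t * sin (2 * halfPhase N k / (T / N) * t) := by
  rw [fourierCoef]
  congr 1
  refine intervalIntegral.integral_congr fun t ht ↦ ?_
  rw [Set.uIcc_of_le hT.le] at ht
  have h_phase : (π / 2 + k * π) * t / T = 2 * halfPhase N k / (T / N) * t := by
    unfold halfPhase
    field_simp
  simp only [hatFn_eq_hat hN ht.2, h_phase]

lemma fourierCoef_eq (hT : 0 < T) (hj₀ : 1 ≤ j) (hjN : j ≤ N) :
    fourierCoef N T k j = (if j = N then 1 else 2) / N *
      (sin (halfPhase N k) / halfPhase N k) ^ 2 * sin (2 * j * halfPhase N k) := by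
  have hN : N ≠ 0 := by omega
  have hx : 0 < halfPhase N k := halfPhase_pos hN
  rw [fourierCoef_eq_integral_hat hN hT]
  set x := halfPhase N k
  obtain ⟨h, hh_def⟩ : ∃ h, h = T / N := ⟨_, rfl⟩
  have hh : 0 < h := by rw [hh_def]; positivity
  have hT_eq : T = N * h := by rw [hh_def, mul_div_cancel₀ T (by positivity)]
  have hw : 2 * x / h ≠ 0 := by positivity
  have h_phase_cell : 2 * x / h * h / 2 = x := by field_simp
  have h_phase_node : 2 * x / h * (j * h) = 2 * j * x := by field_simp
  have h_left : 0 ≤ j * h - h := by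
    have : (1 : ℝ) ≤ j := by exact_mod_cast hj₀
    nlinarith
  rw [← hh_def]
  split_ifs with hj
  · have h_node : T = j * h := by rw [hj, hT_eq]
    have hcos : cos (2 * x / h * (j * h)) = 0 := by
      rw [h_phase_node, hj, cos_two_mul_halfPhase hN]
    rw [h_node, integral_hat_mul_sin_left_of_cos_eq_zero hh hw h_left hcos, h_phase_cell,
      h_phase_node, hj]
    field_simp
  · have h_right : j * h + h ≤ T := by
      have : (j + 1 : ℝ) ≤ N := by exact_mod_cast lt_of_le_of_ne hjN hj
      rw [hT_eq]
      nlinarith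
    rw [integral_hat_mul_sin hh hw h_left h_right, h_phase_cell, h_phase_node, hT_eq]
    field_simp
    norm_num

lemma sq_halfPhase_mul_fourierCoef_reflect (hT : 0 < T) (hj₀ : 1 ≤ j) (hjN : j ≤ N)
    (hkl : k + l + 1 = 2 * N) :
    halfPhase N l ^ 2 * fourierCoef N T l j = -(halfPhase N k ^ 2 * fourierCoef N T k j) := by
  have hN : N ≠ 0 := by omega
  have hk : halfPhase N k ≠ 0 := (halfPhase_pos hN).ne'
  have hl : π - halfPhase N k ≠ 0 := halfPhase_eq_pi_sub hN hkl ▸ (halfPhase_pos hN).ne'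
  rw [fourierCoef_eq hT hj₀ hjN, fourierCoef_eq hT hj₀ hjN, halfPhase_eq_pi_sub hN hkl, sin_pi_sub,
    sin_two_mul_nat_mul_pi_sub]
  field_simp

end FourierCoefficients

theorem stmt_12_general {N : ℕ} {T : ℝ} (hT : 0 < T) {j : ℕ} (hj₀ : 1 ≤ j) (hjN : j ≤ N) {k : ℕ}
    (hk : k < 2 * N) :
    fourierCoef N T (2 * N - 1 - k) j =
      -((2 * k + 1 : ℝ) ^ 2 / ((4 * N : ℝ) - 1 - 2 * k) ^ 2) * fourierCoef N T k j := by
  obtain ⟨l, hl⟩ : ∃ l, l = 2 * N - 1 - k := ⟨_, rfl⟩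
  have hkl : k + l + 1 = 2 * N := by omega
  have h_odd : (4 * N : ℝ) - 1 - 2 * k = 2 * l + 1 := by
    have : (k + l + 1 : ℝ) = 2 * N := by exact_mod_cast hkl
    linarith
  have hN : (0 : ℝ) < N := by exact_mod_cast (by omega : 0 < N)
  have h_reflect := sq_halfPhase_mul_fourierCoef_reflect hT hj₀ hjN hkl
  rw [halfPhase_eq_mul, halfPhase_eq_mul] at h_reflect
  rw [← hl, h_odd]
  field_simp at h_reflect ⊢
  linarith

/-- reflection identity for the hat-function Fourier coefficients: for
every `j` with `1 ≤ j ≤ N` and every `k` with `0 ≤ k ≤ N−1`, one has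
`A_{2N−1−k}^j = − ((2k+1)² / (4N − 1 − 2k)²) · A_k^j`. -/
theorem stmt_12 (N : ℕ) (hN : 1 ≤ N) (T : ℝ) (hT : 0 < T)
    (j : ℕ) (hj1 : 1 ≤ j) (hj2 : j ≤ N)
    (k : ℕ) (hk : k ≤ N - 1) :
    fourierCoef N T (2 * N - 1 - k) j =
      -((2 * k + 1 : ℝ) ^ 2 / ((4 * N : ℝ) - 1 - 2 * k) ^ 2) * fourierCoef N T k j :=
  stmt_12_general hT hj1 hj2 (by omega)
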